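/- Let β > 0, and let j ≥ 1, ℓ ≥ 1 be integers and t ≥ 0. Then for every real number b ≥ 0 the nested integral satisfies ∫₀^t ∫₀^{s_ℓ} ⋯ ∫₀^{s_2} e^{-β(s_2+⋯+s_ℓ)} e^{β(j+ℓ-1)s_1} ds_1 ⋯ ds_ℓ ≤ e^{β(j+b)t} · β^{-ℓ} · Π_{i=0}^{ℓ-1} 1/(j+i+b). -/

import Mathlib

open MeasureTheory

/-- The nested integral `∫₀^t ∫₀^{s_ℓ} ⋯ ∫₀^{s_2} e^{-β(s_2+⋯+s_ℓ)} e^{a s_1} ds_1 ⋯ ds_ℓ`,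
defined recursively in the number `ℓ` of integrations. -/
noncomputable def nestInt (β a : ℝ) : ℕ → ℝ → ℝ
  | 0, _ => 1
  | 1, t => ∫ s in (0:ℝ)..t, Real.exp (a * s)
  | (n + 2), t => ∫ s in (0:ℝ)..t, Real.exp (-β * s) * nestInt β a (n + 1) s

/-- The iterated exponential integral
`I^ℓ_j(t) = β^ℓ ((j+ℓ-1)!/(j-1)!) e^{-βjt} ∫₀^t ∫₀^{s_ℓ} ⋯ ∫₀^{s_2}
e^{-β(s_2+⋯+s_ℓ)} e^{β(j+ℓ-1)s_1} ds_1 ⋯ ds_ℓ`, with `I^0_j(t) = 1`. -/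
noncomputable def Iex (β : ℝ) (j ℓ : ℕ) (t : ℝ) : ℝ :=
  if ℓ = 0 then 1
  else β ^ ℓ * ((Nat.factorial (j + ℓ - 1) : ℝ) / (Nat.factorial (j - 1) : ℝ)) *
    Real.exp (-(β * j * t)) * nestInt β (β * ((j : ℝ) + (ℓ : ℝ) - 1)) ℓ t

/-!
Let `F_k` be the `k`-fold integral. Multiplying by `e^{-βs}` and integrating turns a bound
`F_k(s) ≤ K e^{(c+β)s}` into `F_{k+1}(t) ≤ (K / c) e^{ct}`, since the integral over `[0, t]` is at
most the one over `(-∞, t]`. Starting from the rate `c + (ℓ-1)β`, which must dominate `a`, the rate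
drops by `β` at each integration and the factors `1 / (c + iβ)` accumulate. The wanted bound is the
case `c = β(j + b)`.
-/

theorem continuous_nestInt (β a : ℝ) : ∀ ℓ, Continuous (nestInt β a ℓ)
  | 0 => continuous_const
  | 1 => intervalIntegral.continuous_primitive
      (fun x y => Continuous.intervalIntegrable (by fun_prop) x y) 0
  | ℓ + 2 => by
      have ih := continuous_nestInt β a (ℓ + 1)
      exact intervalIntegral.continuous_primitive
        (fun x y => Continuous.intervalIntegrable (by fun_prop) x y) 0

theorem intervalIntegral_le_of_le_exp_mul {f : ℝ → ℝ} {u t c K : ℝ} (hut : u ≤ t) (hc : 0 < c)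
    (hK : 0 ≤ K) (hf : IntervalIntegrable f volume u t)
    (hle : ∀ s ∈ Set.Icc u t, f s ≤ Real.exp (c * s) * K) :
    ∫ s in u..t, f s ≤ Real.exp (c * t) * (1 / c * K) := by
  have hexp : ∫ s in u..t, Real.exp (c * s) = (Real.exp (c * t) - Real.exp (c * u)) * (1 / c) := by
    rw [intervalIntegral.integral_comp_mul_left Real.exp hc.ne', integral_exp, smul_eq_mul, one_div,
      mul_comm]
  calc ∫ s in u..t, f s
      ≤ ∫ s in u..t, Real.exp (c * s) * K :=
        intervalIntegral.integral_mono_on hut hf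
          (Continuous.intervalIntegrable (by fun_prop) u t) hle
    _ = (Real.exp (c * t) - Real.exp (c * u)) * (1 / c * K) := by
        rw [intervalIntegral.integral_mul_const, hexp, mul_assoc]
    _ ≤ Real.exp (c * t) * (1 / c * K) := by
        gcongr
        exact sub_le_self _ (Real.exp_pos _).le

theorem prod_range_one_div_mul_add {F : Type*} [Semifield F] (β x : F) (n : ℕ) :
    ∏ i ∈ Finset.range n, 1 / (β * x + i * β) =
      (β ^ n)⁻¹ * ∏ i ∈ Finset.range n, 1 / (x + i) := by
  have hfactor (i : ℕ) : 1 / (β * x + i * β) = β⁻¹ * (1 / (x + i)) := by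
    rw [mul_comm (i : F) β, ← mul_add, one_div, mul_inv, one_div]
  simp only [hfactor, Finset.prod_mul_distrib, Finset.prod_const, Finset.card_range, inv_pow]

theorem nestInt_one_le {β a c t : ℝ} (hc : 0 < c) (hac : a ≤ c) (ht : 0 ≤ t) :
    nestInt β a 1 t ≤ Real.exp (c * t) * (1 / c) := by
  have hle : ∀ s ∈ Set.Icc 0 t, Real.exp (a * s) ≤ Real.exp (c * s) * 1 := by
    rintro s ⟨hs, -⟩
    rw [mul_one]
    gcongr
  simpa only [nestInt, mul_one] using intervalIntegral_le_of_le_exp_mul ht hc zero_le_one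
    (Continuous.intervalIntegrable (by fun_prop) 0 t) hle

theorem nestInt_succ_le {β a c t K : ℝ} {ℓ : ℕ} (hℓ : 1 ≤ ℓ) (hc : 0 < c) (hK : 0 ≤ K)
    (ht : 0 ≤ t) (hle : ∀ s ∈ Set.Icc 0 t, nestInt β a ℓ s ≤ Real.exp ((c + β) * s) * K) :
    nestInt β a (ℓ + 1) t ≤ Real.exp (c * t) * (1 / c * K) := by
  obtain ⟨n, rfl⟩ := Nat.exists_eq_add_of_le' hℓ
  have hcont : Continuous fun s => Real.exp (-β * s) * nestInt β a (n + 1) s := by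
    have := continuous_nestInt β a (n + 1)
    fun_prop
  refine intervalIntegral_le_of_le_exp_mul ht hc hK (hcont.intervalIntegrable 0 t) fun s hs => ?_
  calc Real.exp (-β * s) * nestInt β a (n + 1) s
      ≤ Real.exp (-β * s) * (Real.exp ((c + β) * s) * K) := by
        gcongr
        exact hle s hs
    _ = Real.exp (c * s) * K := by
        rw [← mul_assoc, ← Real.exp_add]
        ring_nf

theorem nestInt_bound_general {β a c t : ℝ} {ℓ : ℕ} (hℓ : 1 ≤ ℓ)
    (hc : ∀ i < ℓ, 0 < c + i * β) (ha : a ≤ c + (ℓ - 1) * β) (ht : 0 ≤ t) :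
    nestInt β a ℓ t ≤ Real.exp (c * t) * ∏ i ∈ Finset.range ℓ, 1 / (c + i * β) := by
  have hc₀ : 0 < c := by simpa using hc 0 hℓ
  induction ℓ, hℓ using Nat.le_induction generalizing c t with
  | base => simpa using nestInt_one_le (β := β) hc₀ (by simpa using ha) ht
  | succ ℓ hℓ ih =>
    have hshift (i : ℕ) : c + (i + 1 : ℕ) * β = c + β + i * β := by push_cast; ring
    have hcβ : ∀ i < ℓ, 0 < c + β + i * β := fun i hi =>
      hshift i ▸ hc (i + 1) (Nat.succ_lt_succ hi)
    have hcβ₀ : 0 < c + β := by simpa using hcβ 0 hℓ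
    have haβ : a ≤ c + β + (ℓ - 1) * β := by
      push_cast at ha
      linarith
    have hK : 0 ≤ ∏ i ∈ Finset.range ℓ, 1 / (c + β + i * β) :=
      Finset.prod_nonneg fun i hi => (one_div_pos.2 (hcβ i (Finset.mem_range.1 hi))).le
    calc nestInt β a (ℓ + 1) t
        ≤ Real.exp (c * t) * (1 / c * ∏ i ∈ Finset.range ℓ, 1 / (c + β + i * β)) :=
          nestInt_succ_le hℓ hc₀ hK ht fun s hs => ih hcβ haβ hs.1 hcβ₀
      _ = Real.exp (c * t) * ∏ i ∈ Finset.range (ℓ + 1), 1 / (c + i * β) := by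
          simp only [Finset.prod_range_succ', hshift, Nat.cast_zero, zero_mul, add_zero,
            mul_comm (1 / c)]

/-- Bound on the nested integral: for every real `b ≥ 0`,
`∫₀^t ⋯ ∫₀^{s_2} e^{-β(s_2+⋯+s_ℓ)} e^{β(j+ℓ-1)s_1} ds_1 ⋯ ds_ℓ
  ≤ e^{β(j+b)t} β^{-ℓ} Π_{i=0}^{ℓ-1} 1/(j+i+b)`. -/
theorem nestInt_bound (β : ℝ) (hβ : 0 < β) (j ℓ : ℕ) (hj : 1 ≤ j) (hℓ : 1 ≤ ℓ)
    (t : ℝ) (ht : 0 ≤ t) (b : ℝ) (hb : 0 ≤ b) :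
    nestInt β (β * ((j : ℝ) + (ℓ : ℝ) - 1)) ℓ t
      ≤ Real.exp (β * ((j : ℝ) + b) * t) * (β ^ ℓ)⁻¹ *
        ∏ i ∈ Finset.range ℓ, 1 / ((j : ℝ) + (i : ℝ) + b) := by
  simp only [add_right_comm _ _ b, mul_assoc (Real.exp _), ← prod_range_one_div_mul_add]
  exact nestInt_bound_general hℓ (fun i _ => by positivity) (by nlinarith) ht
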